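/- arXiv:2112.06526 — 2 statements merged into one kernel-verified Lean document; each statement's English description precedes it below -/
import Mathlib

section
/- There exist a constant C > 0 and q₀ ∈ ℕ such that for all integers q ≥ q₀, all n ∈ ℕ and all integers m ≥ 0, the number of q-basic subgraphs of the complete graph K_n on [n] having exactly m edges is at most C · (3q)³ · exp( m log n − (q/3) log(q/3) + 16 q ). -/
open scoped BigOperators Classical
open Finset Filter

noncomputable section

/-- Number of edges of a finite simple graph. -/
def edgeCount {V : Type*} [Fintype V] (G : SimpleGraph V) : ℕ :=
  (Finset.univ.filter (fun e : Sym2 V => e ∈ G.edgeSet)).card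

/-- Number of triangles (3-cliques) of a finite simple graph. -/
def triangleCount {V : Type*} [Fintype V] (G : SimpleGraph V) : ℕ :=
  (Finset.univ.filter (fun s : Finset V => G.IsNClique 3 s)).card

/-- Number of vertices lying in at least one triangle. -/
def vT {V : Type*} [Fintype V] (G : SimpleGraph V) : ℕ :=
  (Finset.univ.filter (fun v : V => ∃ u w : V, G.Adj v u ∧ G.Adj v w ∧ G.Adj u w)).card

/-- Degree of a vertex. -/
def deg {V : Type*} [Fintype V] (G : SimpleGraph V) (v : V) : ℕ :=
  (Finset.univ.filter (fun u => G.Adj v u)).card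

/-- Probability that the Erdős–Rényi random graph `G_{n,p}` equals the graph `G`. -/
def graphProb (n : ℕ) (p : ℝ) (G : SimpleGraph (Fin n)) : ℝ :=
  p ^ edgeCount G * (1 - p) ^ (n.choose 2 - edgeCount G)

/-- Probability of an event under the Erdős–Rényi measure. -/
def prob (n : ℕ) (p : ℝ) (A : Set (SimpleGraph (Fin n))) : ℝ :=
  ∑ G : SimpleGraph (Fin n), if G ∈ A then graphProb n p G else 0

/-- Conditional probability `P(A | B)` (with the convention `0` when `P(B) = 0`). -/
def condProb (n : ℕ) (p : ℝ) (A B : Set (SimpleGraph (Fin n))) : ℝ :=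
  prob n p (A ∩ B) / prob n p B

/-- Conditional expectation `E_G[f]` given that every edge of `G` is present. -/
def condExpect (n : ℕ) (p : ℝ) (G : SimpleGraph (Fin n)) (f : SimpleGraph (Fin n) → ℝ) : ℝ :=
  (∑ H : SimpleGraph (Fin n), if G ≤ H then graphProb n p H * f H else 0) /
    prob n p {H | G ≤ H}

/-- `E_G(T)`: conditional expectation of the number of triangles. -/
def condTri (n : ℕ) (p : ℝ) (G : SimpleGraph (Fin n)) : ℝ :=
  condExpect n p G (fun H => (triangleCount H : ℝ))

/-- The variational quantity `Φ_{n,p,k}(a)`. -/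
def Phi (n : ℕ) (p k a : ℝ) : ℝ :=
  sInf {x : ℝ | ∃ G : SimpleGraph (Fin n),
    a * k ≤ condTri n p G ∧ x = (edgeCount G : ℝ) * Real.log (1 / p)}

/-- A seed, with parameters `a, w, C, k` and edge probability `p`. -/
def IsSeed (n : ℕ) (p a w C k : ℝ) (G : SimpleGraph (Fin n)) : Prop :=
  (a - w) * k ≤ condTri n p G ∧
  (edgeCount G : ℝ) ≤ C * a * w⁻¹ * k ^ ((2 : ℝ) / 3) * Real.log (1 / p)

/-- A core, with parameters `a, w, C, k` and edge probability `p`. -/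
def IsCore (n : ℕ) (p a w C k : ℝ) (G : SimpleGraph (Fin n)) : Prop :=
  (a - 2 * w) * k ≤ condTri n p G ∧
  (edgeCount G : ℝ) ≤ C * a * w⁻¹ * k ^ ((2 : ℝ) / 3) * Real.log (1 / p) ∧
  ∀ e ∈ G.edgeSet,
    w ^ 2 * k ^ ((1 : ℝ) / 3) / (C * a * Real.log (1 / p)) ≤
      condTri n p G - condTri n p (G.deleteEdges {e})

/-- A `q`-basic graph. -/
def qBasic {V : Type*} [Fintype V] (q : ℕ) (G : SimpleGraph V) : Prop :=
  vT G = q ∧ ∀ e ∈ G.edgeSet, vT (G.deleteEdges {e}) < q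

/-- Containment of a `(δ, m)`-near-clique. -/
def containsNearClique {n : ℕ} (H : SimpleGraph (Fin n)) (δ m : ℝ) : Prop :=
  ∃ H' : SimpleGraph (Fin n), H' ≤ H ∧ 0 < edgeCount H' ∧
    ∀ v : Fin n, (∃ u, H'.Adj v u) →
      (1 - 4 * δ ^ ((1 : ℝ) / 2)) * (2 * m) ^ ((1 : ℝ) / 2) ≤ (deg H' v : ℝ)

/-- Partition function of the exponential random graph model tilted by `exp(b · V_T)`. -/
def ergmZ (n : ℕ) (p b : ℝ) : ℝ :=
  ∑ G : SimpleGraph (Fin n), graphProb n p G * Real.exp (b * vT G)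

/-- Probability of an event under the exponential random graph measure. -/
def ergmProb (n : ℕ) (p b : ℝ) (A : Set (SimpleGraph (Fin n))) : ℝ :=
  (∑ G : SimpleGraph (Fin n),
    if G ∈ A then graphProb n p G * Real.exp (b * vT G) else 0) / ergmZ n p b

/-!
A minimal family of triangles covering all the triangle vertices of a `q`-basic graph `G` contains
every edge of `G`, and each of its `t` triangles has a vertex lying in no other triangle of the
family. Taking that vertex as apex and the opposite edge as base, the `2 * t` spokes joining apices
to the ends of their bases are pairwise distinct and differ from the bases; so if there are `r`
distinct bases, then `G` has `2 * t + r` edges. The graph is recovered from its `t` pairs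
(apex, base), so there are at most `(n ^ 2).choose r * (n * r).choose t` such graphs, which by
`r ^ t ≤ r ^ r * n ^ (t - r)` is at most `n ^ (2 * t + r) * exp r / t !`. Finally `q / 3 ≤ t ≤ q`,
as the triangles cover `q` vertices and contain `t` distinct apices.
-/

lemma exists_irredundant_subcover {α : Type*} {W : Set α} {𝒯 : Finset (Finset α)}
    (h𝒯 : ∀ v ∈ W, ∃ T ∈ 𝒯, v ∈ T) :
    ∃ S ⊆ 𝒯, (∀ v ∈ W, ∃ T ∈ S, v ∈ T) ∧
      ∀ T ∈ S, ∃ v ∈ W, v ∈ T ∧ ∀ T' ∈ S, v ∈ T' → T' = T := by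
  obtain ⟨S, hS𝒯, hS, hmin⟩ :=
    exists_minimal_le_of_wellFoundedLT (fun S => ∀ v ∈ W, ∃ T ∈ S, v ∈ T) 𝒯 h𝒯
  refine ⟨S, hS𝒯, hS, fun T hT => ?_⟩
  have not_cover_erase : ¬ ∀ v ∈ W, ∃ T' ∈ S.erase T, v ∈ T' := fun h =>
    S.notMem_erase T (hmin h (S.erase_subset T) hT)
  push Not at not_cover_erase
  obtain ⟨v, hvW, hv⟩ := not_cover_erase
  have unique : ∀ T' ∈ S, v ∈ T' → T' = T := fun T' hT' hvT' =>
    by_contra fun hne => hv T' (mem_erase.2 ⟨hne, hT'⟩) hvT'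
  obtain ⟨T', hT', hvT'⟩ := hS v hvW
  exact ⟨v, hvW, unique T' hT' hvT' ▸ hvT', unique⟩

section TriangleVertices

variable {V : Type*} [Fintype V] {G H : SimpleGraph V} {v : V} {q : ℕ}

/-- The set of vertices lying in at least one triangle of `G`, so that `vT G` is its cardinality. -/
def triangleVertices (G : SimpleGraph V) : Finset V :=
  univ.filter fun v => ∃ u w, G.Adj v u ∧ G.Adj v w ∧ G.Adj u w

lemma mem_triangleVertices_iff : v ∈ triangleVertices G ↔ ∃ T, G.IsNClique 3 T ∧ v ∈ T := by
  simp only [triangleVertices, mem_filter_univ]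
  constructor
  · rintro ⟨u, w, hvu, hvw, huw⟩
    exact ⟨{v, u, w}, SimpleGraph.is3Clique_triple_iff.2 ⟨hvu, hvw, huw⟩, by simp⟩
  · rintro ⟨T, hT, hvT⟩
    obtain ⟨a, b, c, hab, hac, hbc, rfl⟩ := SimpleGraph.is3Clique_iff.1 hT
    simp only [mem_insert, mem_singleton] at hvT
    rcases hvT with rfl | rfl | rfl
    · exact ⟨b, c, hab, hac, hbc⟩
    · exact ⟨a, c, hab.symm, hbc, hac⟩
    · exact ⟨a, b, hac.symm, hbc.symm, hab⟩

lemma triangleVertices_mono (h : H ≤ G) : triangleVertices H ⊆ triangleVertices G := fun v hv => by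
  obtain ⟨T, hT, hvT⟩ := mem_triangleVertices_iff.1 hv
  exact mem_triangleVertices_iff.2 ⟨T, hT.mono h, hvT⟩

lemma qBasic.eq_of_le (hG : qBasic q G) (hHG : H ≤ G) (hH : q ≤ vT H) : H = G := by
  refine le_antisymm hHG fun a b hab => ?_
  by_contra hab'
  have hle : H ≤ G.deleteEdges {s(a, b)} := fun c d hcd => by
    refine SimpleGraph.deleteEdges_adj.2 ⟨hHG hcd, fun hmem => hab' ?_⟩
    rwa [← SimpleGraph.mem_edgeSet, ← Set.mem_singleton_iff.1 hmem]
  exact (hG.2 s(a, b) hab).not_ge (hH.trans (card_le_card (triangleVertices_mono hle)))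

end TriangleVertices

section CliqueUnion

variable {V : Type*} {G : SimpleGraph V} {S : Finset (Finset V)} {T : Finset V} {q : ℕ}

/-- The union of the complete graphs on the members of `S`: the graph rebuilt from a family of
triangles. -/
def cliqueUnion (S : Finset (Finset V)) : SimpleGraph V where
  Adj a b := a ≠ b ∧ ∃ T ∈ S, a ∈ T ∧ b ∈ T
  symm := ⟨fun _ _ ⟨hne, T, hT, ha, hb⟩ => ⟨hne.symm, T, hT, hb, ha⟩⟩
  loopless := ⟨fun _ h => h.1 rfl⟩

lemma isClique_cliqueUnion (hT : T ∈ S) : (cliqueUnion S).IsClique T :=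
  fun _ ha _ hb hne => ⟨hne, T, hT, ha, hb⟩

lemma cliqueUnion_le (hS : ∀ T ∈ S, G.IsClique T) : cliqueUnion S ≤ G :=
  fun _ _ ⟨hne, T, hT, ha, hb⟩ => hS T hT ha hb hne

lemma qBasic.cliqueUnion_eq [Fintype V] (hG : qBasic q G) (hS : ∀ T ∈ S, G.IsNClique 3 T)
    (hcover : ∀ v ∈ triangleVertices G, ∃ T ∈ S, v ∈ T) : cliqueUnion S = G := by
  refine hG.eq_of_le (cliqueUnion_le fun T hT => (hS T hT).isClique) ?_
  rw [← hG.1]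
  refine card_le_card fun v hv => ?_
  obtain ⟨T, hT, hvT⟩ := hcover v hv
  exact mem_triangleVertices_iff.2 ⟨T, ⟨isClique_cliqueUnion hT, (hS T hT).card_eq⟩, hvT⟩

end CliqueUnion

section Cones

variable {V : Type*} {A : Finset (V × Sym2 V)} {S : Finset (Finset V)} {T : Finset V} {v : V}

/-- The vertex set of the triangle with apex `p.1` and base `p.2`. It has three elements only when
`p.2` is off the diagonal and does not contain `p.1`. -/
def cone (p : V × Sym2 V) : Finset V := insert p.1 p.2.toFinset

/-- A family of nondegenerate triangles, given by apex and base, in which each apex lies in no other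
triangle; this forces each triangle to appear only once. -/
structure IsConeFamily (A : Finset (V × Sym2 V)) : Prop where
  injOn_apex : Set.InjOn Prod.fst (A : Set (V × Sym2 V))
  apex_notMem_base : ∀ p ∈ A, ∀ p' ∈ A, p.1 ∉ p'.2
  base_not_isDiag : ∀ p ∈ A, ¬ p.2.IsDiag

lemma fst_mem_cone (p : V × Sym2 V) : p.1 ∈ cone p := mem_insert_self _ _

lemma exists_cone_eq (hT : #T = 3) (hv : v ∈ T) :
    ∃ e : Sym2 V, v ∉ e ∧ ¬ e.IsDiag ∧ cone (v, e) = T := by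
  obtain ⟨a, b, hab, hTab⟩ := card_eq_two.1 (by rw [card_erase_of_mem hv, hT] : #(T.erase v) = 2)
  have hbase : s(a, b).toFinset = T.erase v := by rw [Sym2.toFinset_mk_eq, hTab]
  refine ⟨s(a, b), fun hmem => ?_, hab, ?_⟩
  · exact T.notMem_erase v (hbase ▸ Sym2.mem_toFinset.2 hmem)
  · rw [cone, hbase, insert_erase hv]

lemma exists_isConeFamily_image_cone (hcard : ∀ T ∈ S, #T = 3)
    (hpriv : ∀ T ∈ S, ∃ v ∈ T, ∀ T' ∈ S, v ∈ T' → T' = T) :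
    ∃ A : Finset (V × Sym2 V), IsConeFamily A ∧ A.image cone = S ∧ #A = #S := by
  let P : Set (V × Sym2 V) := {p | p.1 ∉ p.2 ∧ ¬ p.2.IsDiag ∧ ∀ T' ∈ S, p.1 ∈ T' → T' = cone p}
  have hsurj : Set.SurjOn cone P S := fun T hT => by
    obtain ⟨v, hvT, hv⟩ := hpriv T hT
    obtain ⟨e, hve, he, rfl⟩ := exists_cone_eq (hcard T hT) hvT
    exact ⟨(v, e), ⟨hve, he, hv⟩, rfl⟩
  obtain ⟨A, hAP, hinj, rfl⟩ := S.exists_subset_injOn_image_eq_of_surjOn P hsurj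
  have eq_of_mem_cone : ∀ p ∈ A, ∀ p' ∈ A, p.1 ∈ cone p' → p' = p := fun p hp p' hp' h =>
    hinj hp' hp ((hAP hp).2.2 _ (mem_image_of_mem cone hp') h)
  refine ⟨A, ⟨fun p hp p' hp' h => ?_, fun p hp p' hp' h => ?_, fun p hp => (hAP hp).2.1⟩, rfl,
    (card_image_of_injOn hinj).symm⟩
  · exact (eq_of_mem_cone p hp p' hp' (h ▸ fst_mem_cone p')).symm
  · obtain rfl := eq_of_mem_cone p hp p' hp' (mem_insert_of_mem (Sym2.mem_toFinset.2 h))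
    exact (hAP hp).1 h

/-- The edges joining an apex to an end of its base. -/
def spokes (A : Finset (V × Sym2 V)) : Finset (Sym2 V) :=
  A.biUnion fun p => p.2.toFinset.image fun u => s(p.1, u)

lemma mem_spokes_iff {e : Sym2 V} : e ∈ spokes A ↔ ∃ p ∈ A, ∃ u ∈ p.2, s(p.1, u) = e := by
  simp only [spokes, mem_biUnion, mem_image, Sym2.mem_toFinset]

lemma IsConeFamily.card_spokes (hA : IsConeFamily A) : #(spokes A) = 2 * #A := by
  have hdisj : (A : Set (V × Sym2 V)).PairwiseDisjoint
      fun p => p.2.toFinset.image fun u => s(p.1, u) := by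
    intro p hp p' hp' hne
    refine disjoint_left.2 fun e he he' => hne ?_
    obtain ⟨u, -, rfl⟩ := mem_image.1 he
    obtain ⟨u', hu', h⟩ := mem_image.1 he'
    rcases Sym2.eq_iff.1 h with ⟨hapex, -⟩ | ⟨-, hapex⟩
    · exact hA.injOn_apex hp hp' hapex.symm
    · exact absurd (hapex ▸ Sym2.mem_toFinset.1 hu') (hA.apex_notMem_base p hp p' hp')
  have hcard : ∀ p ∈ A, #(p.2.toFinset.image fun u => s(p.1, u)) = 2 := fun p hp => by
    rw [card_image_of_injective _ fun _ _ => Sym2.congr_right.1,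
      Sym2.card_toFinset_of_not_isDiag _ (hA.base_not_isDiag p hp)]
  rw [spokes, card_biUnion hdisj, sum_congr rfl hcard, sum_const, smul_eq_mul, mul_comm]

lemma IsConeFamily.disjoint_bases_spokes (hA : IsConeFamily A) :
    Disjoint (A.image Prod.snd) (spokes A) := by
  refine disjoint_left.2 fun e he he' => ?_
  obtain ⟨p, hp, rfl⟩ := mem_image.1 he
  obtain ⟨p', hp', u, -, h⟩ := mem_spokes_iff.1 he'
  exact hA.apex_notMem_base p' hp' p hp (h ▸ Sym2.mem_mk_left _ _)

lemma ne_and_mem_cone_iff {p : V × Sym2 V} {a b : V} (hp : p.1 ∉ p.2) (hd : ¬ p.2.IsDiag) :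
    (a ≠ b ∧ a ∈ cone p ∧ b ∈ cone p) ↔ p.2 = s(a, b) ∨ ∃ u ∈ p.2, s(p.1, u) = s(a, b) := by
  obtain ⟨v, e⟩ := p
  induction e using Sym2.ind with
  | _ x y =>
    simp only [Sym2.mem_iff, Sym2.mk_isDiag_iff] at hp hd
    simp only [cone, mem_insert, Sym2.mem_toFinset, Sym2.mem_iff, Sym2.eq_iff, exists_eq_or_imp,
      exists_eq_left]
    grind

lemma IsConeFamily.mem_bases_union_spokes_iff (hA : IsConeFamily A) {a b : V} :
    s(a, b) ∈ A.image Prod.snd ∪ spokes A ↔ (cliqueUnion (A.image cone)).Adj a b :=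
  calc s(a, b) ∈ A.image Prod.snd ∪ spokes A
      ↔ ∃ p ∈ A, p.2 = s(a, b) ∨ ∃ u ∈ p.2, s(p.1, u) = s(a, b) := by
        simp only [mem_union, mem_image, mem_spokes_iff, and_or_left, exists_or]
    _ ↔ ∃ p ∈ A, a ≠ b ∧ a ∈ cone p ∧ b ∈ cone p := exists_congr fun p => and_congr_right fun hp =>
        (ne_and_mem_cone_iff (hA.apex_notMem_base p hp p hp) (hA.base_not_isDiag p hp)).symm
    _ ↔ (cliqueUnion (A.image cone)).Adj a b := by
        simp only [cliqueUnion, exists_mem_image]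
        tauto

lemma IsConeFamily.edgeCount_cliqueUnion [Fintype V] (hA : IsConeFamily A) :
    edgeCount (cliqueUnion (A.image cone)) = 2 * #A + #(A.image Prod.snd) := by
  have hedges : (univ.filter fun e => e ∈ (cliqueUnion (A.image cone)).edgeSet) =
      A.image Prod.snd ∪ spokes A := by
    ext e
    induction e using Sym2.ind with
    | _ a b => rw [mem_filter_univ, SimpleGraph.mem_edgeSet, hA.mem_bases_union_spokes_iff]
  rw [edgeCount, hedges, card_union_of_disjoint hA.disjoint_bases_spokes, hA.card_spokes, add_comm]

lemma qBasic.exists_isConeFamily [Fintype V] {G : SimpleGraph V} {q : ℕ} (hG : qBasic q G) :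
    ∃ A : Finset (V × Sym2 V), IsConeFamily A ∧ cliqueUnion (A.image cone) = G ∧
      #A ≤ q ∧ q ≤ 3 * #A := by
  have hcliques : ∀ v ∈ (triangleVertices G : Set V), ∃ T ∈ G.cliqueFinset 3, v ∈ T :=
    fun v hv => by
      simpa only [SimpleGraph.mem_cliqueFinset_iff] using mem_triangleVertices_iff.1 (mem_coe.1 hv)
  obtain ⟨S, hS, hcover, hpriv⟩ := exists_irredundant_subcover hcliques
  have hclique : ∀ T ∈ S, G.IsNClique 3 T := fun T hT =>
    SimpleGraph.mem_cliqueFinset_iff.1 (hS hT)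
  obtain ⟨A, hA, rfl, hcard⟩ := exists_isConeFamily_image_cone (fun T hT => (hclique T hT).card_eq)
    fun T hT => (hpriv T hT).imp fun v hv => hv.2
  refine ⟨A, hA, hG.cliqueUnion_eq hclique hcover, ?_, ?_⟩
  · rw [← hG.1]
    refine card_le_card_of_injOn Prod.fst (fun p hp => ?_) hA.injOn_apex
    exact mem_triangleVertices_iff.2
      ⟨cone p, hclique _ (mem_image_of_mem cone hp), fst_mem_cone p⟩
  · have hsub : triangleVertices G ⊆ (A.image cone).biUnion id := fun v hv =>
      mem_biUnion.2 (hcover v hv)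
    rw [← hG.1, hcard, mul_comm]
    exact (card_le_card hsub).trans
      (card_biUnion_le_card_mul _ _ _ fun T hT => (hclique T hT).card_eq.le)

end Cones

section Counting

lemma card_filter_card_image_snd_le {α β : Type*} [Fintype α] [Fintype β] [DecidableEq β]
    (t r : ℕ) :
    #(univ.filter fun A : Finset (α × β) => #A = t ∧ #(A.image Prod.snd) = r) ≤
      (Fintype.card β).choose r * (Fintype.card α * r).choose t := by
  have hsub : (univ.filter fun A : Finset (α × β) => #A = t ∧ #(A.image Prod.snd) = r) ⊆
      ((univ : Finset β).powersetCard r).biUnion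
        fun R => ((univ : Finset α) ×ˢ R).powersetCard t := fun A hA => by
    obtain ⟨ht, hr⟩ := mem_filter_univ A |>.1 hA
    refine mem_biUnion.2 ⟨A.image Prod.snd, mem_powersetCard_univ.2 hr, mem_powersetCard.2 ⟨?_, ht⟩⟩
    exact fun p hp => mem_product.2 ⟨mem_univ _, mem_image_of_mem Prod.snd hp⟩
  calc _ ≤ _ := card_le_card hsub
    _ ≤ #((univ : Finset β).powersetCard r) * (Fintype.card α * r).choose t :=
      card_biUnion_le_card_mul _ _ _ fun R hR => by
        rw [card_powersetCard, card_product, (mem_powersetCard.1 hR).2, card_univ]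
    _ = _ := by rw [card_powersetCard, card_univ]

lemma card_sym2_le_sq (V : Type*) [Fintype V] : Fintype.card (Sym2 V) ≤ Fintype.card V ^ 2 := by
  rw [sq, ← Fintype.card_prod]
  exact Fintype.card_le_of_surjective _ Sym2.mk_surjective

lemma choose_mul_choose_le {n t r : ℕ} (hrt : r ≤ t) (htn : t ≤ n) :
    ((n ^ 2).choose r * (n * r).choose t : ℝ) ≤
      (n : ℝ) ^ (2 * t + r) * (Real.exp r / t.factorial) := by
  obtain ⟨s, rfl⟩ := Nat.exists_eq_add_of_le hrt
  have hbases : ((n ^ 2).choose r : ℝ) ≤ ((n : ℝ) ^ 2) ^ r / r.factorial := by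
    exact_mod_cast Nat.choose_le_pow_div (α := ℝ) r (n ^ 2)
  have hpairs : ((n * r).choose (r + s) : ℝ) ≤ ((n : ℝ) * r) ^ (r + s) / (r + s).factorial := by
    exact_mod_cast Nat.choose_le_pow_div (α := ℝ) (r + s) (n * r)
  calc ((n ^ 2).choose r * (n * r).choose (r + s) : ℝ)
      ≤ ((n : ℝ) ^ 2) ^ r / r.factorial * (((n : ℝ) * r) ^ (r + s) / (r + s).factorial) := by gcongr
    _ = (n : ℝ) ^ (3 * r + s) * (r : ℝ) ^ s * ((r : ℝ) ^ r / r.factorial / (r + s).factorial) := by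
      ring
    _ ≤ (n : ℝ) ^ (3 * r + s) * (n : ℝ) ^ s * (Real.exp r / (r + s).factorial) := by
      gcongr
      · omega
      · exact Real.pow_div_factorial_le_exp _ r.cast_nonneg r
    _ = (n : ℝ) ^ (2 * (r + s) + r) * (Real.exp r / (r + s).factorial) := by ring

lemma inv_factorial_le_exp {x : ℝ} {t : ℕ} (hx : 0 ≤ x) (hxt : x ≤ t) :
    (t.factorial : ℝ)⁻¹ ≤ Real.exp (x - x * Real.log x) := by
  rcases le_total x 1 with hx1 | hx1
  · refine (inv_le_one_of_one_le₀ (mod_cast t.factorial_pos)).trans (Real.one_le_exp ?_)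
    have := mul_nonpos_of_nonneg_of_nonpos hx (Real.log_nonpos hx hx1)
    linarith
  · have hx0 : 0 < x := by linarith
    have hpow : Real.exp (x * Real.log x) ≤ x ^ t := by
      rw [mul_comm, ← Real.rpow_def_of_pos hx0, ← Real.rpow_natCast]
      exact Real.rpow_le_rpow_of_exponent_le hx1 hxt
    rw [Real.exp_sub, le_div_iff₀ (Real.exp_pos _), inv_mul_eq_div]
    calc Real.exp (x * Real.log x) / t.factorial ≤ x ^ t / t.factorial := by gcongr
      _ ≤ Real.exp x := Real.pow_div_factorial_le_exp x hx t

lemma pow_le_exp_mul_log {x : ℝ} (hx : 0 ≤ x) (m : ℕ) : x ^ m ≤ Real.exp (m * Real.log x) := by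
  rw [Real.exp_nat_mul]
  exact pow_le_pow_left₀ hx (Real.le_exp_log x) m

lemma choose_mul_choose_le_exp {n t r q : ℕ} (hrt : r ≤ t) (htn : t ≤ n) (htq : t ≤ q)
    (hqt : q ≤ 3 * t) :
    ((n ^ 2).choose r * (n * r).choose t : ℝ) ≤
      Real.exp (((2 * t + r : ℕ) : ℝ) * Real.log n - q / 3 * Real.log (q / 3) + 4 / 3 * q) := by
  have hrq : (r : ℝ) ≤ q := mod_cast hrt.trans htq
  have hqt' : (q : ℝ) / 3 ≤ t := by
    rw [div_le_iff₀' three_pos]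
    exact_mod_cast hqt
  calc ((n ^ 2).choose r * (n * r).choose t : ℝ)
      ≤ (n : ℝ) ^ (2 * t + r) * (Real.exp r * (t.factorial : ℝ)⁻¹) := choose_mul_choose_le hrt htn
    _ ≤ Real.exp (((2 * t + r : ℕ) : ℝ) * Real.log n) *
          (Real.exp q * Real.exp (q / 3 - q / 3 * Real.log (q / 3))) := by
      gcongr
      · exact pow_le_exp_mul_log n.cast_nonneg _
      · exact inv_factorial_le_exp (by positivity) hqt'
    _ = _ := by
      rw [← Real.exp_add, ← Real.exp_add]
      congr 1
      ring

variable (V : Type*) [Fintype V]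

/-- The cone families of `t` triangles whose union has `m` edges: the codes for `q`-basic graphs. -/
def coneFamilies (m t : ℕ) : Finset (Finset (V × Sym2 V)) :=
  univ.filter fun A => IsConeFamily A ∧ #A = t ∧ 2 * t + #(A.image Prod.snd) = m

lemma card_coneFamilies_le_choose (t r : ℕ) :
    #(coneFamilies V (2 * t + r) t) ≤
      (Fintype.card V ^ 2).choose r * (Fintype.card V * r).choose t :=
  calc #(coneFamilies V (2 * t + r) t)
      ≤ #(univ.filter fun A : Finset (V × Sym2 V) => #A = t ∧ #(A.image Prod.snd) = r) :=
        card_le_card fun A hA => by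
          obtain ⟨-, hAt, hAr⟩ := (mem_filter_univ A).1 hA
          exact (mem_filter_univ A).2 ⟨hAt, Nat.add_left_cancel hAr⟩
    _ ≤ (Fintype.card (Sym2 V)).choose r * (Fintype.card V * r).choose t :=
        card_filter_card_image_snd_le t r
    _ ≤ (Fintype.card V ^ 2).choose r * (Fintype.card V * r).choose t :=
        Nat.mul_le_mul_right _ (Nat.choose_le_choose r (card_sym2_le_sq V))

lemma card_coneFamilies_le_exp {q t : ℕ} (m : ℕ) (htq : t ≤ q) (hqt : q ≤ 3 * t) :
    (#(coneFamilies V m t) : ℝ) ≤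
      Real.exp (m * Real.log (Fintype.card V) - q / 3 * Real.log (q / 3) + 4 / 3 * q) := by
  rcases (coneFamilies V m t).eq_empty_or_nonempty with hempty | ⟨A, hAmem⟩
  · rw [hempty, card_empty, Nat.cast_zero]
    exact (Real.exp_pos _).le
  obtain ⟨hA, hAt, rfl⟩ := (mem_filter_univ A).1 hAmem
  have hrt : #(A.image Prod.snd) ≤ t := hAt ▸ card_image_le
  have htn : t ≤ Fintype.card V :=
    hAt ▸ card_le_card_of_injOn Prod.fst (fun _ _ => mem_univ _) hA.injOn_apex
  exact le_trans (mod_cast card_coneFamilies_le_choose V t _)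
    (choose_mul_choose_le_exp hrt htn htq hqt)

lemma setOf_qBasic_subset_biUnion_coneFamilies (q m : ℕ) :
    {G : SimpleGraph V | qBasic q G ∧ edgeCount G = m} ⊆
      (((range (q + 1)).filter fun t => q ≤ 3 * t).biUnion fun t =>
        (coneFamilies V m t).image fun A => cliqueUnion (A.image cone) :
          Finset (SimpleGraph V)) := by
  rintro G ⟨hG, rfl⟩
  obtain ⟨A, hA, rfl, htq, hqt⟩ := hG.exists_isConeFamily
  refine mem_biUnion.2 ⟨#A, mem_filter.2 ⟨mem_range_succ_iff.2 htq, hqt⟩, mem_image_of_mem _ ?_⟩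
  exact (mem_filter_univ A).2 ⟨hA, rfl, hA.edgeCount_cliqueUnion.symm⟩

theorem qBasic_count_bound_general (q m : ℕ) :
    ({G : SimpleGraph V | qBasic q G ∧ edgeCount G = m}.ncard : ℝ) ≤
      Real.exp (m * Real.log (Fintype.card V) - q / 3 * Real.log (q / 3) + 7 / 3 * q) := by
  set I := (range (q + 1)).filter fun t => q ≤ 3 * t
  set B := Real.exp (m * Real.log (Fintype.card V) - q / 3 * Real.log (q / 3) + 4 / 3 * q)
  have hcount : {G : SimpleGraph V | qBasic q G ∧ edgeCount G = m}.ncard ≤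
      ∑ t ∈ I, #(coneFamilies V m t) := by
    refine (Set.ncard_le_ncard (setOf_qBasic_subset_biUnion_coneFamilies V q m)).trans ?_
    rw [Set.ncard_coe_finset]
    exact card_biUnion_le.trans (sum_le_sum fun t _ => card_image_le)
  have hfamilies : ∀ t ∈ I, (#(coneFamilies V m t) : ℝ) ≤ B := fun t ht =>
    card_coneFamilies_le_exp V m (mem_range_succ_iff.1 (mem_filter.1 ht).1) (mem_filter.1 ht).2
  have hI : (#I : ℝ) ≤ Real.exp q := by
    have : #I ≤ q + 1 := (card_filter_le _ _).trans_eq (card_range _)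
    exact le_trans (mod_cast this) (Real.add_one_le_exp (q : ℝ))
  calc ({G : SimpleGraph V | qBasic q G ∧ edgeCount G = m}.ncard : ℝ)
      ≤ ∑ t ∈ I, (#(coneFamilies V m t) : ℝ) := mod_cast hcount
    _ ≤ #I * B := (sum_le_card_nsmul _ _ _ hfamilies).trans_eq (nsmul_eq_mul _ _)
    _ ≤ Real.exp q * B := by gcongr
    _ = _ := by
      rw [← Real.exp_add]
      congr 1
      ring

end Counting

/-- **The number of `q`-basic graphs with `m` edges.** -/
theorem qBasic_count_bound :
    ∃ C : ℝ, 0 < C ∧ ∃ q₀ : ℕ, ∀ q ≥ q₀, ∀ n m : ℕ,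
      ((Finset.univ.filter (fun G : SimpleGraph (Fin n) =>
            qBasic q G ∧ edgeCount G = m)).card : ℝ) ≤
        C * (3 * q : ℝ) ^ 3 *
          Real.exp ((m : ℝ) * Real.log n - (q : ℝ) / 3 * Real.log ((q : ℝ) / 3) + 16 * q) := by
  refine ⟨1, one_pos, 1, fun q hq n m => ?_⟩
  have hq1 : (1 : ℝ) ≤ q := mod_cast hq
  have hpoly : (1 : ℝ) ≤ (3 * q : ℝ) ^ 3 := one_le_pow₀ (by linarith)
  rw [one_mul, ← Set.ncard_coe_finset, coe_filter_univ]
  refine (qBasic_count_bound_general (Fin n) q m).trans ?_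
  rw [Fintype.card_fin]
  exact (Real.exp_le_exp.2 (by linarith)).trans
    (le_mul_of_one_le_left (Real.exp_pos _).le hpoly)
end
end

section
/- Fix λ > 0 and set p_n = λ/n. There exist a constant C > 0 and q₀ ∈ ℕ such that for all integers q ≥ q₀ and all n > λ: P(G_{n,p_n} contains a q-basic subgraph of K_n) ≤ exp( −(q/3) log(q/3) + C q ). -/
open scoped BigOperators Classical
open Finset Filter

noncomputable section

/-!
Choose among the triangles of `H` a minimal family covering the same vertices. Each member of it has
a private vertex, and it has at least `q / 3` members when `q` vertices lie in triangles. So it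
suffices to bound, for `k = ⌈q / 3⌉`, the sum `S k` of `p ^ e(F)` over the families `F` of `k`
triples having private vertices, where `e(F)` counts the pairs contained in a triple of `F`.
Deleting any of `k + 1` triples leaves a family of `k`, and that triple contains a vertex isolated
in the remaining graph: it brings two new edges if its base is one of the at most `3 n` present
edges, and three otherwise. Hence `(k + 1) * S (k + 1) ≤ (3 (n p) ^ 2 + (n p) ^ 3) * S k`, and the
`k!` gained by iterating is what gives the factor `exp (-(q / 3) log (q / 3))`.
-/

lemma sum_le_sum_of_subset_image {ι κ N : Type*} [DecidableEq ι] [AddCommMonoid N] [PartialOrder N]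
    [IsOrderedAddMonoid N] {s : Finset ι} {t : Finset κ} {φ : κ → ι} {f : ι → N}
    (hst : s ⊆ t.image φ) (hf : ∀ i, 0 ≤ f i) : ∑ i ∈ s, f i ≤ ∑ j ∈ t, f (φ j) :=
  (sum_le_sum_of_subset_of_nonneg hst fun i _ _ => hf i).trans
    (sum_image_le_of_nonneg fun i _ => hf i)

section Families

variable {V : Type*}

/-- The graph on `V` whose edges are the pairs of distinct elements of `t`. -/
def cliqueOn (t : Finset V) : SimpleGraph V where
  Adj a b := a ∈ t ∧ b ∈ t ∧ a ≠ b
  symm := ⟨fun _ _ h => ⟨h.2.1, h.1, h.2.2.symm⟩⟩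
  loopless := ⟨fun _ h => h.2.2 rfl⟩

lemma cliqueOn_le_iff {t : Finset V} {H : SimpleGraph V} : cliqueOn t ≤ H ↔ H.IsClique t :=
  ⟨fun h _ ha _ hb hab => h ⟨ha, hb, hab⟩, fun h _ _ ⟨ha, hb, hab⟩ => h ha hb hab⟩

lemma exists_mem_of_mem_support_sup_cliqueOn {T : Finset (Finset V)} {v : V}
    (hv : v ∈ (T.sup cliqueOn).support) : ∃ t ∈ T, v ∈ t := by
  obtain ⟨w, hvw⟩ := hv
  simp only [Finset.sup_eq_iSup, Set.mem_ofPred_eq, SimpleGraph.iSup_adj] at hvw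
  obtain ⟨t, ht, hv, -⟩ := hvw
  exact ⟨t, ht, hv⟩

/-- A family of sets is irredundant when each of its members has a private point, i.e. one lying in
no other member. -/
def Irredundant (T : Finset (Finset V)) : Prop :=
  ∀ t ∈ T, ∃ v ∈ t, ∀ s ∈ T, v ∈ s → s = t

lemma Irredundant.subset {S T : Finset (Finset V)} (hT : Irredundant T) (hST : S ⊆ T) :
    Irredundant S := fun t ht =>
  let ⟨v, hv, hpriv⟩ := hT t (hST ht)
  ⟨v, hv, fun s hs => hpriv s (hST hs)⟩

lemma exists_irredundant_subcover_s18 (T : Finset (Finset V)) :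
    ∃ F ⊆ T, Irredundant F ∧ T.biUnion id ⊆ F.biUnion id := by
  obtain ⟨F, hFT, hF⟩ := exists_minimal_le_of_wellFoundedLT
    (fun F : Finset (Finset V) => T.biUnion id ⊆ F.biUnion id) T Subset.rfl
  refine ⟨F, hFT, fun t ht => ?_, hF.prop⟩
  by_contra! hshared
  have hcover : T.biUnion id ⊆ (F.erase t).biUnion id := by
    refine hF.prop.trans fun v hv => ?_
    obtain ⟨s, hs, hvs⟩ := mem_biUnion.1 hv
    by_cases hst : s = t
    · obtain ⟨s', hs', hvs', hne⟩ := hshared v (hst ▸ hvs)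
      exact mem_biUnion.2 ⟨s', mem_erase.2 ⟨hne, hs'⟩, hvs'⟩
    · exact mem_biUnion.2 ⟨s, mem_erase.2 ⟨hst, hs⟩, hvs⟩
  exact notMem_erase t F (hF.le_of_le hcover (erase_subset t F) ht)

end Families

section Finite

variable {V : Type*} [Fintype V]

lemma edgeCount_eq_card_edgeFinset (G : SimpleGraph V) : edgeCount G = #G.edgeFinset := by
  unfold edgeCount
  congr 1
  ext e
  simp

lemma vT_mono {G H : SimpleGraph V} (h : G ≤ H) : vT G ≤ vT H := by
  refine card_le_card (monotone_filter_right _ ?_)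
  rintro v - ⟨u, w, hvu, hvw, huw⟩
  exact ⟨u, w, h hvu, h hvw, h huw⟩

lemma edgeCount_sup_le (G H : SimpleGraph V) : edgeCount (G ⊔ H) ≤ edgeCount G + edgeCount H := by
  simp only [edgeCount_eq_card_edgeFinset, SimpleGraph.edgeFinset_sup]
  exact card_union_le _ _

lemma edgeCount_add_card_le_edgeCount_sup {G K : SimpleGraph V} {D : Finset (Sym2 V)}
    (hK : ∀ e ∈ D, e ∈ K.edgeSet) (hG : ∀ e ∈ D, e ∉ G.edgeSet) :
    edgeCount G + #D ≤ edgeCount (G ⊔ K) := by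
  have hdisj : Disjoint G.edgeFinset D :=
    disjoint_right.2 fun e he => by simpa using hG e he
  simp only [edgeCount_eq_card_edgeFinset, SimpleGraph.edgeFinset_sup]
  rw [← card_union_of_disjoint hdisj]
  exact card_le_card (union_subset_union_right fun e he => by simpa using hK e he)

lemma edgeCount_add_card_edgeFinset_compl (G : SimpleGraph V) :
    edgeCount G + #Gᶜ.edgeFinset = (Fintype.card V).choose 2 := by
  rw [edgeCount_eq_card_edgeFinset, ← card_union_of_disjoint
    (SimpleGraph.disjoint_edgeFinset.2 disjoint_compl_right), ← SimpleGraph.edgeFinset_sup,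
    ← SimpleGraph.card_edgeFinset_top_eq_card_choose_two]
  congr!
  exact sup_compl_eq_top

lemma edgeCount_eq_add_card_sdiff {G H : SimpleGraph V} (h : G ≤ H) :
    edgeCount H = edgeCount G + #(H \ G).edgeFinset := by
  rw [edgeCount_eq_card_edgeFinset, edgeCount_eq_card_edgeFinset, SimpleGraph.edgeFinset_sdiff,
    add_comm, card_sdiff_add_card_eq_card (SimpleGraph.edgeFinset_mono h)]

lemma sum_supergraph_edgeFinset_sdiff {N : Type*} [AddCommMonoid N] (G : SimpleGraph V)
    (f : Finset (Sym2 V) → N) :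
    ∑ H with G ≤ H, f (H \ G).edgeFinset = ∑ D ∈ Gᶜ.edgeFinset.powerset, f D := by
  refine sum_bij' (fun H _ => (H \ G).edgeFinset) (fun D _ => G ⊔ SimpleGraph.fromEdgeSet D)
    (fun H _ => ?_) (fun D _ => ?_) (fun H hH => ?_) (fun D hD => ?_) fun H _ => rfl
  · exact mem_powerset.2 (SimpleGraph.edgeFinset_mono fun _ _ h => ⟨h.1.ne, h.2⟩)
  · exact mem_filter.2 ⟨mem_univ _, le_sup_left⟩
  · rw [SimpleGraph.coe_edgeFinset, SimpleGraph.fromEdgeSet_edgeSet,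
      sup_sdiff_cancel_right (mem_filter.1 hH).2]
  · ext e
    have hcompl : e ∈ D → e ∈ Gᶜ.edgeSet := fun he =>
      SimpleGraph.mem_edgeFinset.1 (mem_powerset.1 hD he)
    induction e with | _ a b
    simp only [SimpleGraph.mem_edgeSet, SimpleGraph.compl_adj] at hcompl
    simp only [SimpleGraph.mem_edgeFinset, SimpleGraph.mem_edgeSet, SimpleGraph.sdiff_adj,
      SimpleGraph.sup_adj, SimpleGraph.fromEdgeSet_adj, mem_coe]
    tauto

lemma sum_supergraph_pow_mul_pow (p : ℝ) (G : SimpleGraph V) :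
    ∑ H with G ≤ H, p ^ edgeCount H * (1 - p) ^ ((Fintype.card V).choose 2 - edgeCount H) =
      p ^ edgeCount G :=
  calc ∑ H with G ≤ H, p ^ edgeCount H * (1 - p) ^ ((Fintype.card V).choose 2 - edgeCount H)
      = ∑ H with G ≤ H, p ^ edgeCount G *
          (p ^ #(H \ G).edgeFinset * (1 - p) ^ (#Gᶜ.edgeFinset - #(H \ G).edgeFinset)) := by
        refine sum_congr rfl fun H hH => ?_
        rw [edgeCount_eq_add_card_sdiff (mem_filter.1 hH).2,
          ← edgeCount_add_card_edgeFinset_compl G, pow_add, Nat.add_sub_add_left, mul_assoc]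
    _ = ∑ D ∈ Gᶜ.edgeFinset.powerset,
          p ^ edgeCount G * (p ^ #D * (1 - p) ^ (#Gᶜ.edgeFinset - #D)) :=
        sum_supergraph_edgeFinset_sdiff G fun D =>
          p ^ edgeCount G * (p ^ #D * (1 - p) ^ (#Gᶜ.edgeFinset - #D))
    _ = p ^ edgeCount G := by
        rw [← mul_sum, sum_pow_mul_eq_add_pow, add_sub_cancel, one_pow, mul_one]

lemma edgeCount_cliqueOn (t : Finset V) : edgeCount (cliqueOn t) = (#t).choose 2 := by
  have hedges : univ.filter (· ∈ (cliqueOn t).edgeSet) = t.offDiag.image Sym2.mk.uncurry := by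
    ext e
    refine e.ind fun a b => ?_
    simp only [mem_filter_univ, SimpleGraph.mem_edgeSet, mem_image, mem_offDiag, Prod.exists,
      Function.uncurry_apply_pair, Sym2.eq_iff]
    constructor
    · exact fun h => ⟨a, b, h, Or.inl ⟨rfl, rfl⟩⟩
    · rintro ⟨x, y, h, ⟨rfl, rfl⟩ | ⟨rfl, rfl⟩⟩
      exacts [h, SimpleGraph.Adj.symm (G := cliqueOn t) h]
  rw [edgeCount, hedges, Sym2.card_image_offDiag]

lemma edgeCount_sup_cliqueOn_le {T : Finset (Finset V)} {r : ℕ} (hT : ∀ t ∈ T, #t = r) :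
    edgeCount (T.sup cliqueOn) ≤ r.choose 2 * #T := by
  induction T using Finset.induction with
  | empty => simp [edgeCount]
  | insert t T ht ih =>
    rw [sup_insert, card_insert_of_notMem ht, mul_add_one, add_comm]
    have h := edgeCount_cliqueOn t
    rw [hT t (mem_insert_self t T)] at h
    exact (edgeCount_sup_le _ _).trans
      (add_le_add h.le (ih fun s hs => hT s (mem_insert_of_mem hs)))

lemma Irredundant.card_le {T : Finset (Finset V)} (hT : Irredundant T) :
    #T ≤ Fintype.card V := by
  choose v hv hpriv using hT
  have hinj : Function.Injective fun t : T => v t t.2 := fun s t hst =>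
    Subtype.ext (hpriv t t.2 s s.2 (Set.mem_of_eq_of_mem hst.symm (hv s s.2)))
  simpa only [Fintype.card_coe] using Fintype.card_le_of_injective _ hinj

lemma vT_le_card_biUnion_cliqueFinset (H : SimpleGraph V) :
    vT H ≤ #((H.cliqueFinset 3).biUnion id) := by
  refine card_le_card fun v hv => ?_
  obtain ⟨u, w, hvu, hvw, huw⟩ := (mem_filter.1 hv).2
  refine mem_biUnion.2 ⟨{v, u, w}, ?_, mem_insert_self _ _⟩
  exact SimpleGraph.mem_cliqueFinset_iff.2 (SimpleGraph.is3Clique_triple_iff.2 ⟨hvu, hvw, huw⟩)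

lemma exists_irredundant_triangles (H : SimpleGraph V) :
    ∃ F ⊆ H.cliqueFinset 3, Irredundant F ∧ vT H ≤ 3 * #F := by
  obtain ⟨F, hF, hirr, hcover⟩ := exists_irredundant_subcover_s18 (H.cliqueFinset 3)
  refine ⟨F, hF, hirr, ?_⟩
  have hcard : ∀ t ∈ F, #t ≤ 3 := fun t ht =>
    (SimpleGraph.mem_cliqueFinset_iff.1 (hF ht)).card_eq.le
  calc vT H ≤ #((H.cliqueFinset 3).biUnion id) := vT_le_card_biUnion_cliqueFinset H
    _ ≤ #(F.biUnion id) := card_le_card hcover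
    _ ≤ #F * 3 := card_biUnion_le_card_mul F id 3 hcard
    _ = 3 * #F := mul_comm _ _

variable (V) in
/-- The irredundant families of `k` three-element subsets of `V`. -/
def irredundantTriples (k : ℕ) : Finset (Finset (Finset V)) :=
  {F ∈ (univ.powersetCard 3).powersetCard k | Irredundant F}

lemma mem_irredundantTriples {k : ℕ} {F : Finset (Finset V)} :
    F ∈ irredundantTriples V k ↔ (∀ t ∈ F, #t = 3) ∧ #F = k ∧ Irredundant F := by
  simp [irredundantTriples, mem_powersetCard, subset_iff, and_assoc]

lemma exists_irredundantTriples_of_le_vT {H : SimpleGraph V} {q : ℕ} (hq : q ≤ vT H) :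
    ∃ F ∈ irredundantTriples V (q ⌈/⌉ 3), F.sup cliqueOn ≤ H := by
  obtain ⟨F₀, hF₀, hirr, hvT⟩ := exists_irredundant_triangles H
  have hk : q ⌈/⌉ 3 ≤ #F₀ := (ceilDiv_le_iff_le_mul (by norm_num)).2 (hq.trans hvT)
  obtain ⟨F, hF, hcard⟩ := exists_subset_card_eq hk
  have hclique : ∀ t ∈ F, H.IsNClique 3 t := fun t ht =>
    SimpleGraph.mem_cliqueFinset_iff.1 (hF₀ (hF ht))
  exact ⟨F, mem_irredundantTriples.2 ⟨fun t ht => (hclique t ht).card_eq, hcard, hirr.subset hF⟩,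
    Finset.sup_le fun t ht => cliqueOn_le_iff.2 (hclique t ht).isClique⟩

/-- The three-element sets of vertices that contain an isolated vertex of `G`. -/
def newTriples (G : SimpleGraph V) : Finset (Finset V) :=
  {t ∈ univ.powersetCard 3 | ¬ (t : Set V) ⊆ G.support}

lemma erase_mem_irredundantTriples {k : ℕ} {F : Finset (Finset V)} {t : Finset V}
    (hF : F ∈ irredundantTriples V (k + 1)) (ht : t ∈ F) :
    F.erase t ∈ irredundantTriples V k := by
  rw [mem_irredundantTriples] at hF ⊢
  obtain ⟨hthree, hcard, hirr⟩ := hF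
  refine ⟨fun s hs => hthree s (mem_of_mem_erase hs), ?_, hirr.subset (erase_subset t F)⟩
  rw [card_erase_of_mem ht, hcard, Nat.add_sub_cancel]

lemma mem_newTriples_of_mem_irredundantTriples {k : ℕ} {F : Finset (Finset V)} {t : Finset V}
    (hF : F ∈ irredundantTriples V k) (ht : t ∈ F) :
    t ∈ newTriples ((F.erase t).sup cliqueOn) := by
  obtain ⟨hthree, -, hirr⟩ := mem_irredundantTriples.1 hF
  obtain ⟨v, hvt, hpriv⟩ := hirr t ht
  refine mem_filter.2 ⟨mem_powersetCard_univ.2 (hthree t ht), fun hsub => ?_⟩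
  obtain ⟨s, hs, hvs⟩ := exists_mem_of_mem_support_sup_cliqueOn (hsub hvt)
  exact (mem_erase.1 hs).1 (hpriv s (mem_of_mem_erase hs) hvs)

lemma succ_mul_sum_irredundantTriples_le {w : Finset (Finset V) → ℝ} (hw : ∀ F, 0 ≤ w F) (k : ℕ) :
    (k + 1) * ∑ F ∈ irredundantTriples V (k + 1), w F ≤
      ∑ F ∈ irredundantTriples V k, ∑ t ∈ newTriples (F.sup cliqueOn), w (insert t F) := by
  let pairs : Finset (Σ _ : Finset (Finset V), Finset V) :=
    (irredundantTriples V (k + 1)).sigma fun F => F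
  let extensions : Finset (Σ _ : Finset (Finset V), Finset V) :=
    (irredundantTriples V k).sigma fun F => newTriples (F.sup cliqueOn)
  have hcover : pairs ⊆ extensions.image fun x => ⟨insert x.2 x.1, x.2⟩ := by
    rintro ⟨F, t⟩ h
    obtain ⟨hF, ht⟩ : F ∈ irredundantTriples V (k + 1) ∧ t ∈ F := mem_sigma.1 h
    exact mem_image.2 ⟨⟨F.erase t, t⟩, mem_sigma.2 ⟨erase_mem_irredundantTriples hF ht,
      mem_newTriples_of_mem_irredundantTriples hF ht⟩, by simp only [insert_erase ht]⟩
  calc (k + 1) * ∑ F ∈ irredundantTriples V (k + 1), w F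
      = ∑ F ∈ irredundantTriples V (k + 1), ∑ _t ∈ F, w F := by
        rw [mul_sum]
        refine sum_congr rfl fun F hF => ?_
        rw [sum_const, (mem_irredundantTriples.1 hF).2.1, nsmul_eq_mul, Nat.cast_succ]
    _ = ∑ x ∈ pairs, w x.1 := sum_sigma' _ _ _
    _ ≤ ∑ x ∈ extensions, w (insert x.2 x.1) :=
        sum_le_sum_of_subset_image hcover fun x => hw x.1
    _ = ∑ F ∈ irredundantTriples V k, ∑ t ∈ newTriples (F.sup cliqueOn), w (insert t F) :=
        sum_sigma _ _ _

lemma edgeCount_add_two_le_edgeCount_sup_cliqueOn {G : SimpleGraph V} {x y z : V}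
    (hz : z ∉ G.support) (hxy : x ≠ y) (hxz : x ≠ z) (hyz : y ≠ z) :
    edgeCount G + 2 ≤ edgeCount (G ⊔ cliqueOn {z, x, y}) := by
  have hxz' : ¬ G.Adj x z := fun h => hz ⟨x, h.symm⟩
  have hyz' : ¬ G.Adj y z := fun h => hz ⟨y, h.symm⟩
  have hcard : #{s(x, z), s(y, z)} = 2 := card_pair (by grind [Sym2.eq_iff])
  rw [← hcard]
  apply edgeCount_add_card_le_edgeCount_sup
  · simp [cliqueOn, *]
  · simp [*]

lemma edgeCount_add_three_le_edgeCount_sup_cliqueOn {G : SimpleGraph V} {x y z : V}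
    (hz : z ∉ G.support) (hxy : x ≠ y) (hxz : x ≠ z) (hyz : y ≠ z) (hG : ¬ G.Adj x y) :
    edgeCount G + 3 ≤ edgeCount (G ⊔ cliqueOn {z, x, y}) := by
  have hxz' : ¬ G.Adj x z := fun h => hz ⟨x, h.symm⟩
  have hyz' : ¬ G.Adj y z := fun h => hz ⟨y, h.symm⟩
  have hcard : #{s(x, y), s(x, z), s(y, z)} = 3 :=
    card_eq_three.2 ⟨_, _, _, by grind [Sym2.eq_iff], by grind [Sym2.eq_iff],
      by grind [Sym2.eq_iff], rfl⟩
  rw [← hcard]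
  apply edgeCount_add_card_le_edgeCount_sup
  · simp [cliqueOn, *]
  · simp [*]

/-- The pairs of an isolated vertex `z` of `G` and an unordered pair `e` of distinct vertices other
than `z`; they parametrise `newTriples G` through `(z, e) ↦ {z} ∪ e`. -/
def apexBasePairs (G : SimpleGraph V) : Finset (V × Sym2 V) :=
  {x ∈ univ ×ˢ (⊤ : SimpleGraph V).edgeFinset | x.1 ∉ G.support ∧ x.1 ∉ x.2}

lemma newTriples_subset_image (G : SimpleGraph V) :
    newTriples G ⊆ (apexBasePairs G).image fun x => insert x.1 x.2.toFinset := by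
  intro t ht
  obtain ⟨hcard, hsub⟩ := mem_filter.1 ht
  obtain ⟨z, hzt, hz⟩ := Set.not_subset.1 hsub
  have hbase : #(t.erase z) = 2 := by
    rw [card_erase_of_mem hzt, mem_powersetCard_univ.1 hcard]
  obtain ⟨x, y, hxy, hbase⟩ := card_eq_two.1 hbase
  have hzxy : z ∉ ({x, y} : Finset V) := hbase ▸ notMem_erase z t
  refine mem_image.2 ⟨(z, s(x, y)), ?_, ?_⟩
  · refine mem_filter.2 ⟨mem_product.2 ⟨mem_univ z, ?_⟩, hz, ?_⟩
    · simpa using hxy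
    · simpa using hzxy
  · rw [Sym2.toFinset_mk_eq, ← hbase, insert_erase hzt]

lemma pow_edgeCount_sup_cliqueOn_le {G : SimpleGraph V} {p : ℝ} (hp0 : 0 ≤ p) (hp1 : p ≤ 1)
    {x : V × Sym2 V} (hx : x ∈ apexBasePairs G) :
    p ^ edgeCount (G ⊔ cliqueOn (insert x.1 x.2.toFinset)) ≤
      p ^ edgeCount G * ((if x.2 ∈ G.edgeFinset then p ^ 2 else 0) + p ^ 3) := by
  obtain ⟨z, e⟩ := x
  induction e with | _ x y
  simp only [apexBasePairs, mem_filter, mem_product, mem_univ, SimpleGraph.mem_edgeFinset,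
    SimpleGraph.mem_edgeSet, SimpleGraph.top_adj, true_and, Sym2.mem_iff, not_or] at hx
  obtain ⟨hxy, hz, hzx, hzy⟩ := hx
  rw [Sym2.toFinset_mk_eq]
  split_ifs with hG
  · calc _ ≤ p ^ (edgeCount G + 2) := pow_le_pow_of_le_one hp0 hp1
          (edgeCount_add_two_le_edgeCount_sup_cliqueOn hz hxy (Ne.symm hzx) (Ne.symm hzy))
      _ ≤ _ := by
        rw [pow_add]
        gcongr
        exact le_add_of_nonneg_right (by positivity)
  · rw [zero_add, ← pow_add]
    exact pow_le_pow_of_le_one hp0 hp1 (edgeCount_add_three_le_edgeCount_sup_cliqueOn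
      hz hxy (Ne.symm hzx) (Ne.symm hzy) (by simpa using hG))

lemma sum_newTriples_pow_edgeCount_le {p : ℝ} (hp0 : 0 ≤ p) (hp1 : p ≤ 1) (G : SimpleGraph V) :
    ∑ t ∈ newTriples G, p ^ edgeCount (G ⊔ cliqueOn t) ≤
      p ^ edgeCount G *
        (Fintype.card V * (edgeCount G * p ^ 2 + Fintype.card V ^ 2 * p ^ 3)) := by
  have hpairs : (#(⊤ : SimpleGraph V).edgeFinset : ℝ) ≤ Fintype.card V ^ 2 := by
    rw [SimpleGraph.card_edgeFinset_top_eq_card_choose_two]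
    exact_mod_cast Nat.choose_le_pow (Fintype.card V) 2
  calc ∑ t ∈ newTriples G, p ^ edgeCount (G ⊔ cliqueOn t)
      ≤ ∑ x ∈ apexBasePairs G, p ^ edgeCount (G ⊔ cliqueOn (insert x.1 x.2.toFinset)) :=
        sum_le_sum_of_subset_image (newTriples_subset_image G) fun _ => by positivity
    _ ≤ ∑ x ∈ apexBasePairs G,
          p ^ edgeCount G * ((if x.2 ∈ G.edgeFinset then p ^ 2 else 0) + p ^ 3) :=
        sum_le_sum fun x hx => pow_edgeCount_sup_cliqueOn_le hp0 hp1 hx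
    _ ≤ ∑ x ∈ univ ×ˢ (⊤ : SimpleGraph V).edgeFinset,
          p ^ edgeCount G * ((if x.2 ∈ G.edgeFinset then p ^ 2 else 0) + p ^ 3) :=
        sum_le_sum_of_subset_of_nonneg (filter_subset _ _) fun _ _ _ => by positivity
    _ = p ^ edgeCount G * (Fintype.card V *
          (edgeCount G * p ^ 2 + #(⊤ : SimpleGraph V).edgeFinset * p ^ 3)) := by
        simp only [← mul_sum, sum_product, sum_const, card_univ, nsmul_eq_mul, sum_add_distrib,
          sum_ite_mem, inter_eq_right.2 (SimpleGraph.edgeFinset_mono le_top),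
          card_product, edgeCount_eq_card_edgeFinset, Nat.cast_mul]
        ring
    _ ≤ _ := by gcongr

lemma sum_newTriples_pow_edgeCount_insert_le {p : ℝ} (hp0 : 0 ≤ p) (hp1 : p ≤ 1) {k : ℕ}
    {F : Finset (Finset V)} (hF : F ∈ irredundantTriples V k) :
    ∑ t ∈ newTriples (F.sup cliqueOn), p ^ edgeCount ((insert t F).sup cliqueOn) ≤
      p ^ edgeCount (F.sup cliqueOn) *
        (3 * (Fintype.card V * p) ^ 2 + (Fintype.card V * p) ^ 3) := by
  obtain ⟨hthree, -, hirr⟩ := mem_irredundantTriples.1 hF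
  have hedges : (edgeCount (F.sup cliqueOn) : ℝ) ≤ 3 * Fintype.card V := by
    exact_mod_cast (edgeCount_sup_cliqueOn_le hthree).trans (Nat.mul_le_mul_left 3 hirr.card_le)
  simp only [sup_insert, sup_comm (cliqueOn _)]
  calc ∑ t ∈ newTriples (F.sup cliqueOn), p ^ edgeCount (F.sup cliqueOn ⊔ cliqueOn t)
      ≤ p ^ edgeCount (F.sup cliqueOn) * (Fintype.card V *
          (edgeCount (F.sup cliqueOn) * p ^ 2 + Fintype.card V ^ 2 * p ^ 3)) :=
        sum_newTriples_pow_edgeCount_le hp0 hp1 (F.sup cliqueOn)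
    _ ≤ p ^ edgeCount (F.sup cliqueOn) * (Fintype.card V *
          (3 * Fintype.card V * p ^ 2 + Fintype.card V ^ 2 * p ^ 3)) := by gcongr
    _ = _ := by ring

lemma irredundantTriples_zero : irredundantTriples V 0 = {∅} := by
  ext F
  rw [mem_irredundantTriples, card_eq_zero, mem_singleton]
  refine ⟨fun h => h.2.1, ?_⟩
  rintro rfl
  simp [Irredundant]

lemma sum_irredundantTriples_pow_edgeCount_le {p : ℝ} (hp0 : 0 ≤ p) (hp1 : p ≤ 1) (k : ℕ) :
    ∑ F ∈ irredundantTriples V k, p ^ edgeCount (F.sup cliqueOn) ≤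
      (3 * (Fintype.card V * p) ^ 2 + (Fintype.card V * p) ^ 3) ^ k / k.factorial := by
  induction k with
  | zero => simp [irredundantTriples_zero, edgeCount]
  | succ k ih =>
    set M : ℝ := 3 * (Fintype.card V * p) ^ 2 + (Fintype.card V * p) ^ 3
    have hM : 0 ≤ M := by positivity
    have hsucc : (k + 1) * ∑ F ∈ irredundantTriples V (k + 1), p ^ edgeCount (F.sup cliqueOn) ≤
        M ^ k / k.factorial * M :=
      calc (k + 1) * ∑ F ∈ irredundantTriples V (k + 1), p ^ edgeCount (F.sup cliqueOn)
          ≤ ∑ F ∈ irredundantTriples V k, ∑ t ∈ newTriples (F.sup cliqueOn),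
              p ^ edgeCount ((insert t F).sup cliqueOn) :=
            succ_mul_sum_irredundantTriples_le (fun F => by positivity) k
        _ ≤ ∑ F ∈ irredundantTriples V k, p ^ edgeCount (F.sup cliqueOn) * M :=
            sum_le_sum fun F hF => sum_newTriples_pow_edgeCount_insert_le hp0 hp1 hF
        _ = (∑ F ∈ irredundantTriples V k, p ^ edgeCount (F.sup cliqueOn)) * M :=
            (sum_mul _ _ _).symm
        _ ≤ M ^ k / k.factorial * M := mul_le_mul_of_nonneg_right ih hM
    rw [Nat.factorial_succ, Nat.cast_mul, Nat.cast_succ, pow_succ, mul_comm ((k : ℝ) + 1),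
      ← div_div, le_div_iff₀' (by positivity), ← div_mul_eq_mul_div]
    exact hsucc

end Finite

section Probability

variable {n : ℕ} {p : ℝ}

lemma graphProb_nonneg (hp0 : 0 ≤ p) (hp1 : p ≤ 1) (G : SimpleGraph (Fin n)) :
    0 ≤ graphProb n p G :=
  mul_nonneg (pow_nonneg hp0 _) (pow_nonneg (sub_nonneg.2 hp1) _)

lemma prob_mono (hp0 : 0 ≤ p) (hp1 : p ≤ 1) {A B : Set (SimpleGraph (Fin n))} (hAB : A ⊆ B) :
    prob n p A ≤ prob n p B := by
  simp only [prob, ← sum_filter]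
  exact sum_le_sum_of_subset_of_nonneg (monotone_filter_right _ fun H _ hH => hAB hH)
    fun H _ _ => graphProb_nonneg hp0 hp1 H

lemma prob_exists_mem_le {ι : Type*} (hp0 : 0 ≤ p) (hp1 : p ≤ 1) (s : Finset ι)
    (A : ι → Set (SimpleGraph (Fin n))) :
    prob n p {H | ∃ i ∈ s, H ∈ A i} ≤ ∑ i ∈ s, prob n p (A i) := by
  have hnonneg : ∀ H i, 0 ≤ if H ∈ A i then graphProb n p H else 0 := fun H i =>
    ite_nonneg (graphProb_nonneg hp0 hp1 H) le_rfl
  simp only [prob]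
  rw [sum_comm]
  refine sum_le_sum fun H _ => ?_
  split_ifs with hH
  · obtain ⟨i, hi, hHi⟩ := hH
    calc graphProb n p H = if H ∈ A i then graphProb n p H else 0 := (if_pos hHi).symm
      _ ≤ _ := single_le_sum (fun i _ => hnonneg H i) hi
  · exact sum_nonneg fun i _ => hnonneg H i

lemma prob_supergraph_eq (p : ℝ) (G : SimpleGraph (Fin n)) :
    prob n p {H | G ≤ H} = p ^ edgeCount G := by
  have hsum := sum_supergraph_pow_mul_pow p G
  rw [Fintype.card_fin, sum_filter] at hsum
  rw [← hsum, prob]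
  congr!

lemma prob_le_vT_le (hp0 : 0 ≤ p) (hp1 : p ≤ 1) (q : ℕ) :
    prob n p {H | q ≤ vT H} ≤
      (3 * (n * p) ^ 2 + (n * p) ^ 3) ^ (q ⌈/⌉ 3) / (q ⌈/⌉ 3).factorial := by
  let families := irredundantTriples (Fin n) (q ⌈/⌉ 3)
  calc prob n p {H | q ≤ vT H} ≤ prob n p {H | ∃ F ∈ families, F.sup cliqueOn ≤ H} :=
        prob_mono hp0 hp1 fun _ hH => exists_irredundantTriples_of_le_vT hH
    _ ≤ ∑ F ∈ families, prob n p {H | F.sup cliqueOn ≤ H} :=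
        prob_exists_mem_le hp0 hp1 families fun F => {H | F.sup cliqueOn ≤ H}
    _ = ∑ F ∈ families, p ^ edgeCount (F.sup cliqueOn) :=
        sum_congr rfl fun F _ => prob_supergraph_eq p (F.sup cliqueOn)
    _ ≤ _ := by
        simpa only [Fintype.card_fin] using
          sum_irredundantTriples_pow_edgeCount_le (V := Fin n) hp0 hp1 (q ⌈/⌉ 3)

lemma prob_exists_le_qBasic_le (hp0 : 0 ≤ p) (hp1 : p ≤ 1) (q : ℕ) :
    prob n p {H | ∃ G', G' ≤ H ∧ qBasic q G'} ≤ prob n p {H | q ≤ vT H} :=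
  prob_mono hp0 hp1 fun _ ⟨_, hle, hbasic⟩ => hbasic.1 ▸ vT_mono hle

end Probability

lemma mul_log_le_natCast_mul_log {x : ℝ} {k : ℕ} (hx : 0 ≤ x) (hxk : x ≤ k) :
    x * Real.log x ≤ k * Real.log k := by
  rcases le_total x 1 with hx1 | hx1
  · exact (Real.mul_log_nonpos hx hx1).trans
      (mul_nonneg k.cast_nonneg (Real.log_natCast_nonneg k))
  · exact mul_le_mul hxk (Real.log_le_log (by positivity) hxk) (Real.log_nonneg hx1) k.cast_nonneg

lemma one_div_factorial_le_exp (k : ℕ) :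
    1 / (k.factorial : ℝ) ≤ Real.exp (k - k * Real.log k) := by
  have hpow : Real.exp (k * Real.log k) = (k : ℝ) ^ k := by
    rcases k.eq_zero_or_pos with rfl | hk
    · simp
    · rw [Real.exp_nat_mul, Real.exp_log (Nat.cast_pos.2 hk)]
  have hk : 0 < (k : ℝ) ^ k := hpow ▸ Real.exp_pos _
  rw [Real.exp_sub, hpow, le_div_iff₀ hk, one_div_mul_eq_div]
  exact Real.pow_div_factorial_le_exp _ k.cast_nonneg k

lemma pow_div_factorial_le_exp_neg_mul_log {M x y : ℝ} {k : ℕ} (hM : 1 ≤ M) (hx : 0 ≤ x)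
    (hxk : x ≤ k) (hky : k ≤ y) :
    M ^ k / k.factorial ≤ Real.exp (-x * Real.log x + (1 + Real.log M) * y) := by
  have hlogM : 0 ≤ Real.log M := Real.log_nonneg hM
  have hpow : M ^ k = Real.exp (k * Real.log M) := by
    rw [Real.exp_nat_mul, Real.exp_log (by positivity)]
  calc M ^ k / k.factorial = Real.exp (k * Real.log M) * (1 / k.factorial) := by
        rw [hpow, mul_one_div]
    _ ≤ Real.exp (k * Real.log M) * Real.exp (k - k * Real.log k) := by
        gcongr
        exact one_div_factorial_le_exp k
    _ = Real.exp (-(k * Real.log k) + (1 + Real.log M) * k) := by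
        rw [← Real.exp_add]
        ring_nf
    _ ≤ Real.exp (-x * Real.log x + (1 + Real.log M) * y) := by
        rw [neg_mul]
        exact Real.exp_le_exp.2 (add_le_add (neg_le_neg (mul_log_le_natCast_mul_log hx hxk))
          (mul_le_mul_of_nonneg_left hky (by positivity)))

theorem qBasic_containment_prob_general (l : ℝ) (hl : 0 < l) :
    ∃ C : ℝ, 0 < C ∧ ∀ (q n : ℕ) (p : ℝ), 0 ≤ p → p ≤ 1 → n * p ≤ l →
      prob n p {H | q ≤ vT H} ≤
        Real.exp (-((q : ℝ) / 3) * Real.log ((q : ℝ) / 3) + C * q) := by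
  have hM : 1 ≤ 1 + (3 * l ^ 2 + l ^ 3) := le_add_of_nonneg_right (by positivity)
  refine ⟨1 + Real.log (1 + (3 * l ^ 2 + l ^ 3)),
    add_pos_of_pos_of_nonneg one_pos (Real.log_nonneg hM), fun q n p hp0 hp1 hnp => ?_⟩
  have hlower : (q : ℝ) / 3 ≤ (q ⌈/⌉ 3 : ℕ) := by
    rw [div_le_iff₀' (by norm_num)]
    exact_mod_cast (ceilDiv_le_iff_le_mul (by norm_num)).1 (le_refl (q ⌈/⌉ 3))
  have hupper : ((q ⌈/⌉ 3 : ℕ) : ℝ) ≤ q := by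
    exact_mod_cast (ceilDiv_le_iff_le_mul (by norm_num)).2 (by lia)
  have hbase : 3 * (n * p) ^ 2 + (n * p) ^ 3 ≤ 1 + (3 * l ^ 2 + l ^ 3) :=
    calc 3 * (n * p) ^ 2 + (n * p) ^ 3 ≤ 3 * l ^ 2 + l ^ 3 := by gcongr
      _ ≤ 1 + (3 * l ^ 2 + l ^ 3) := le_add_of_nonneg_left zero_le_one
  calc prob n p {H | q ≤ vT H}
      ≤ (3 * (n * p) ^ 2 + (n * p) ^ 3) ^ (q ⌈/⌉ 3) / (q ⌈/⌉ 3).factorial :=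
        prob_le_vT_le hp0 hp1 q
    _ ≤ (1 + (3 * l ^ 2 + l ^ 3)) ^ (q ⌈/⌉ 3) / (q ⌈/⌉ 3).factorial := by
        gcongr ?_ ^ _ / _
    _ ≤ _ := pow_div_factorial_le_exp_neg_mul_log hM (by positivity) hlower hupper

/-- **Upper bound on the probability to contain a `q`-basic subgraph.** -/
theorem qBasic_containment_prob (l : ℝ) (hl : 0 < l) :
    ∃ C : ℝ, 0 < C ∧ ∃ q₀ : ℕ, ∀ q ≥ q₀, ∀ n : ℕ, l < n →
      prob n (l / n) {H | ∃ G' : SimpleGraph (Fin n), G' ≤ H ∧ qBasic q G'} ≤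
        Real.exp (-((q : ℝ) / 3) * Real.log ((q : ℝ) / 3) + C * q) := by
  obtain ⟨C, hC, hbound⟩ := qBasic_containment_prob_general l hl
  refine ⟨C, hC, 0, fun q _ n hn => ?_⟩
  have hp0 : 0 ≤ l / n := by positivity
  have hp1 : l / n ≤ 1 := div_le_one_of_le₀ hn.le n.cast_nonneg
  have hnp : n * (l / n) ≤ l := (mul_div_cancel₀ l (hl.trans hn).ne').le
  exact (prob_exists_le_qBasic_le hp0 hp1 q).trans (hbound q n (l / n) hp0 hp1 hnp)
end
end
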